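/- For any a ≥ 1 and b ≥ 1, the set of odd positive integers n with k(n) = a and k'(n) = b is exactly one residue class modulo 2^{a+b+1}. -/

import Mathlib

/-!
Write `n + 1 = 2 ^ a * q` with `q` odd, which is what `k(n) = a` says. Then `k'(n) = b` says that
`3 ^ a * q - 1` is an odd multiple of `2 ^ b`, i.e. `3 ^ a * q ≡ 1 + 2 ^ b` modulo `2 ^ (b + 1)`.
As `3 ^ a` is a unit modulo `2 ^ (b + 1)`, this is one congruence `q ≡ c`, and it forces `q` odd
because `b ≥ 1`. Multiplying by `2 ^ a` gives the single class `n + 1 ≡ 2 ^ a * c` modulo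
`2 ^ (a + b + 1)`. The class is unique because its least representative `2 ^ a * c - 1` is itself
odd and positive.
-/

def collatzK (n : Nat) : Nat := padicValNat 2 (n + 1)

def collatzApex (n : Nat) : Nat := 3 ^ collatzK n * ((n + 1) / 2 ^ collatzK n) - 1

def collatzKp (n : Nat) : Nat := padicValNat 2 (collatzApex n)

def collatzKappa (n : Nat) : Nat := collatzApex n / 2 ^ collatzKp n

theorem padicValNat_two_eq_iff {x : ℕ} (hx : x ≠ 0) (a : ℕ) :
    padicValNat 2 x = a ↔ ∃ q, Odd q ∧ x = 2 ^ a * q := by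
  have key : ∀ e q : ℕ, Odd q → padicValNat 2 (2 ^ e * q) = e := by
    intro e q hq
    rw [padicValNat.mul (by positivity) hq.pos.ne', padicValNat.prime_pow,
      padicValNat.eq_zero_of_not_dvd hq.not_two_dvd_nat, add_zero]
  constructor
  · intro h
    obtain ⟨e, q, hq, rfl⟩ := Nat.exists_eq_two_pow_mul_odd hx
    rw [key e q hq] at h
    exact ⟨q, hq, by rw [h]⟩
  · rintro ⟨q, hq, rfl⟩
    exact key a q hq

theorem padicValNat_two_sub_one_eq_iff {y : ℕ} (hy : 1 < y) (b : ℕ) :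
    padicValNat 2 (y - 1) = b ↔ y ≡ 1 + 2 ^ b [MOD 2 ^ (b + 1)] := by
  rw [padicValNat_two_eq_iff (by omega)]
  constructor
  · rintro ⟨q, ⟨m, rfl⟩, h⟩
    have h' : y = 1 + 2 ^ b + 2 ^ (b + 1) * m := by
      have : y = 1 + 2 ^ b * (2 * m + 1) := by omega
      rw [this]; ring
    rw [h']
    simp [Nat.ModEq]
  · intro h
    obtain ⟨x, rfl⟩ : ∃ x, y = 1 + x := ⟨y - 1, by omega⟩
    have hx : x % 2 ^ (b + 1) = 2 ^ b := by
      have h1 : x ≡ 2 ^ b [MOD 2 ^ (b + 1)] := Nat.ModEq.add_left_cancel' 1 h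
      rw [h1, Nat.mod_eq_of_lt (Nat.pow_lt_pow_right (by norm_num) (by omega))]
    refine ⟨2 * (x / 2 ^ (b + 1)) + 1, ⟨_, rfl⟩, ?_⟩
    have h2 := Nat.div_add_mod x (2 ^ (b + 1))
    rw [hx] at h2
    rw [Nat.add_sub_cancel_left]
    conv_lhs => rw [← h2]
    ring

/-- The pair `(k(n), k'(n))` is determined by one congruence, for any `c` that solves
`3 ^ a * c ≡ 1 + 2 ^ b` modulo `2 ^ (b + 1)`. -/
theorem collatzK_and_collatzKp_iff {a b c : ℕ} (ha : 1 ≤ a) (hb : 1 ≤ b)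
    (hc : 3 ^ a * c ≡ 1 + 2 ^ b [MOD 2 ^ (b + 1)]) (n : ℕ) :
    (collatzK n = a ∧ collatzKp n = b) ↔ n + 1 ≡ 2 ^ a * c [MOD 2 ^ (a + b + 1)] := by
  have hpow : 2 ^ (a + b + 1) = 2 ^ a * 2 ^ (b + 1) := by ring
  have hcop : Nat.gcd (2 ^ (b + 1)) (3 ^ a) = 1 := Nat.Coprime.pow _ _ (by norm_num)
  have h3 : 1 < 3 ^ a := Nat.one_lt_pow (by omega) (by norm_num)
  -- Once `k(n) = a` is known, `k'(n) = b` is a congruence on the cofactor of `2 ^ a`.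
  have hKp : ∀ q, 0 < q → n + 1 = 2 ^ a * q → collatzK n = a →
      (collatzKp n = b ↔ 3 ^ a * q ≡ 1 + 2 ^ b [MOD 2 ^ (b + 1)]) := by
    intro q hq hn hK
    rw [collatzKp, collatzApex, hK, hn, Nat.mul_div_cancel_left _ (by positivity)]
    exact padicValNat_two_sub_one_eq_iff (lt_of_lt_of_le h3 (Nat.le_mul_of_pos_right _ hq)) b
  constructor
  · rintro ⟨hK, hK'⟩
    obtain ⟨q, hq, hn⟩ := (padicValNat_two_eq_iff (x := n + 1) (Nat.succ_ne_zero n) a).1 hK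
    have h := (hKp q hq.pos hn hK).1 hK'
    rw [hn, hpow]
    exact (Nat.ModEq.cancel_left_of_coprime hcop (h.trans hc.symm)).mul_left' _
  · intro h
    rw [hpow] at h
    obtain ⟨q, hn⟩ : 2 ^ a ∣ n + 1 :=
      ((h.of_mul_right _).dvd_iff dvd_rfl).2 (dvd_mul_right _ _)
    rw [hn] at h
    have hqc : q ≡ c [MOD 2 ^ (b + 1)] := Nat.ModEq.mul_left_cancel' (by positivity) h
    have h1 := (hqc.mul_left (3 ^ a)).trans hc
    have hodd : Odd q := by
      have h2 := h1.of_dvd (dvd_pow_self 2 (Nat.succ_ne_zero b))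
      have h4 : Odd (1 + 2 ^ b) :=
        odd_one.add_even ((Nat.even_pow.2 ⟨even_two, by omega⟩))
      have h5 : Odd (3 ^ a * q) := by
        rw [Nat.odd_iff] at h4 ⊢
        exact Eq.trans h2 h4
      exact (Nat.odd_mul.1 h5).2
    have hK : collatzK n = a :=
      (padicValNat_two_eq_iff (x := n + 1) (Nat.succ_ne_zero n) a).2 ⟨q, hodd, hn⟩
    exact ⟨hK, (hKp q hodd.pos hn hK).2 h1⟩

theorem exists_three_pow_mul_modEq (a b : ℕ) (hb : 1 ≤ b) :
    ∃ c, 0 < c ∧ c < 2 ^ (b + 1) ∧ 3 ^ a * c ≡ 1 + 2 ^ b [MOD 2 ^ (b + 1)] := by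
  have hcop : Nat.Coprime (3 ^ a) (2 ^ (b + 1)) := Nat.Coprime.pow _ _ (by norm_num)
  obtain ⟨d, -, hd⟩ := Nat.exists_mul_mod_eq_one_of_coprime hcop
    (Nat.one_lt_pow (by omega) (by norm_num))
  have hd' : 3 ^ a * d ≡ 1 [MOD 2 ^ (b + 1)] := by
    rw [Nat.ModEq, hd, Nat.mod_eq_of_lt (Nat.one_lt_pow (by omega) (by norm_num))]
  have hc : 3 ^ a * (d * (1 + 2 ^ b) % 2 ^ (b + 1)) ≡ 1 + 2 ^ b [MOD 2 ^ (b + 1)] := by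
    calc 3 ^ a * (d * (1 + 2 ^ b) % 2 ^ (b + 1))
        ≡ 3 ^ a * (d * (1 + 2 ^ b)) [MOD 2 ^ (b + 1)] := (Nat.mod_modEq _ _).mul_left _
      _ = 3 ^ a * d * (1 + 2 ^ b) := by ring
      _ ≡ 1 * (1 + 2 ^ b) [MOD 2 ^ (b + 1)] := hd'.mul_right _
      _ = 1 + 2 ^ b := one_mul _
  refine ⟨_, Nat.pos_of_ne_zero fun h0 => ?_, Nat.mod_lt _ (by positivity), hc⟩
  rw [h0, mul_zero] at hc
  -- For `b ≥ 1` the right-hand side is smaller than the modulus, hence its own nonzero residue.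
  have h2 : 2 ≤ 2 ^ b := by simpa using Nat.pow_le_pow_right (n := 2) (by norm_num) hb
  rw [Nat.ModEq, Nat.zero_mod, Nat.mod_eq_of_lt (by rw [pow_succ]; omega)] at hc
  omega

/-- For any a, b ≥ 1, the odd positive integers n with k(n) = a and
k'(n) = b form exactly one residue class modulo 2^(a+b+1). -/
theorem kkprime_single_residue_class (a b : ℕ) (ha : 1 ≤ a) (hb : 1 ≤ b) :
    ∃! r : ℕ, r < 2 ^ (a + b + 1) ∧
      ∀ n : ℕ, 0 < n → Odd n →
        ((collatzK n = a ∧ collatzKp n = b) ↔ n % 2 ^ (a + b + 1) = r) := by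
  obtain ⟨c, hc0, hclt, hc⟩ := exists_three_pow_mul_modEq a b hb
  obtain ⟨r, hr⟩ : ∃ r, 2 ^ a * c = r + 1 :=
    ⟨2 ^ a * c - 1, (Nat.sub_add_cancel (Nat.mul_pos (by positivity) hc0)).symm⟩
  have hrlt : r < 2 ^ (a + b + 1) := by
    have : 2 ^ a * c < 2 ^ a * 2 ^ (b + 1) := Nat.mul_lt_mul_of_pos_left hclt (by positivity)
    rw [← pow_add, ← add_assoc] at this
    omega
  have hrodd : Odd r := by
    have h : Even (r + 1) := hr ▸ (Nat.even_pow.2 ⟨even_two, by omega⟩).mul_right c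
    rw [Nat.even_add_one, Nat.not_even_iff_odd] at h
    exact h
  have key : ∀ n, (collatzK n = a ∧ collatzKp n = b) ↔ n % 2 ^ (a + b + 1) = r := by
    intro n
    rw [collatzK_and_collatzKp_iff ha hb hc, hr]
    constructor
    · intro h
      have h1 : n ≡ r [MOD 2 ^ (a + b + 1)] := Nat.ModEq.add_right_cancel' 1 h
      rw [h1, Nat.mod_eq_of_lt hrlt]
    · intro h
      refine Nat.ModEq.add_right 1 ?_
      rw [Nat.ModEq, h, Nat.mod_eq_of_lt hrlt]
  refine ⟨r, ⟨hrlt, fun n _ _ => key n⟩, ?_⟩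
  rintro s ⟨-, hs⟩
  have hmod := Nat.mod_eq_of_lt hrlt
  exact ((hs r hrodd.pos hrodd).1 ((key r).2 hmod)).symm.trans hmod
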